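/- Fix λ0 ∈ ℝ. Suppose a design d satisfies: (i) ∑_{s∈R} p_s [Â_{s11} + x_0 Â_{s12}] = (y_0/(t−1)) B_t; (ii) ∑_{s∈R} p_s [Â_{s21} + x_0 Â_{s22}] = 0; (iii) ∑_{s∈R} p_s B̃ (F_s + x_0 (T_s + λ0 F_s)) B_t = 0; (iv) ∑_{s∈R} p_s = 1; (v) p_s = 0 for every s ∉ R. Then for every generalized inverse G of A_{d22} one has A_d(G) = (n y_0/(t−1)) B_t, and for every τ0 ∈ ℝ^t, every design d′, and every generalized inverse G′ of A_{d′22}: (1/t!) ∑_σ τ0′ S_σ′ A_{d′}(G′) S_σ τ0 ≤ (1/t!) ∑_σ τ0′ S_σ′ A_d(G) S_σ τ0, where the sums run over all permutations σ of {1,…,t}. -/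

import Mathlib

open Matrix MeasureTheory
open scoped Classical

noncomputable section

/-- A treatment sequence: assigns a treatment in `Fin t` to each period in `Fin p`. -/
abbrev TrtSeq (p t : ℕ) := Fin p → Fin t

/-- Treatment/period incidence matrix `T_s`. -/
def Tmat {p t : ℕ} (s : TrtSeq p t) : Matrix (Fin p) (Fin t) ℝ :=
  Matrix.of fun k i => if s k = i then 1 else 0

/-- Carryover incidence matrix `F_s`: first row zero, row `k` records the treatment
in period `k-1`. -/
def Fmat {p t : ℕ} (s : TrtSeq p t) : Matrix (Fin p) (Fin t) ℝ :=
  Matrix.of fun k i =>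
    if (k : ℕ) = 0 then 0
    else if s ⟨(k : ℕ) - 1, Nat.lt_of_le_of_lt (Nat.sub_le _ _) k.isLt⟩ = i then 1 else 0

/-- The all-ones `m × m` matrix `J_m`. -/
def Jmat (m : ℕ) : Matrix (Fin m) (Fin m) ℝ := Matrix.of fun _ _ => 1

/-- `B_t = I_t - J_t / t`. -/
def Bmat (t : ℕ) : Matrix (Fin t) (Fin t) ℝ := 1 - ((t : ℝ))⁻¹ • Jmat t

/-- `B̃ = Σ⁻¹ - Σ⁻¹ J_p Σ⁻¹ / (1_p' Σ⁻¹ 1_p)`. -/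
def Btil {p : ℕ} (S : Matrix (Fin p) (Fin p) ℝ) : Matrix (Fin p) (Fin p) ℝ :=
  S⁻¹ - (((fun _ => (1 : ℝ)) : Fin p → ℝ) ⬝ᵥ (S⁻¹ *ᵥ fun _ => (1 : ℝ)))⁻¹ •
    (S⁻¹ * Jmat p * S⁻¹)

/-- `G_1(s) = T_s`, `G_2(s) = F_s`. -/
def Gmat {p t : ℕ} (i : Fin 2) (s : TrtSeq p t) : Matrix (Fin p) (Fin t) ℝ :=
  if i = 0 then Tmat s else Fmat s

/-- An approximate design: nonnegative weights summing to one. -/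
def IsDesign {p t : ℕ} (w : TrtSeq p t → ℝ) : Prop :=
  (∀ s, 0 ≤ w s) ∧ ∑ s : TrtSeq p t, w s = 1

/-- `Ĉ_{sij} = B_t G_i(s)' B̃ G_j(s) B_t`. -/
def Chat {p t : ℕ} (S : Matrix (Fin p) (Fin p) ℝ) (s : TrtSeq p t) (i j : Fin 2) :
    Matrix (Fin t) (Fin t) ℝ :=
  Bmat t * (Gmat i s)ᵀ * Btil S * Gmat j s * Bmat t

/-- `c_{sij} = tr Ĉ_{sij}`. -/
def cseq {p t : ℕ} (S : Matrix (Fin p) (Fin p) ℝ) (s : TrtSeq p t) (i j : Fin 2) : ℝ :=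
  (Chat S s i j).trace

/-- `Ĉ_{dij} = n ∑_s p_s Ĉ_{sij}`. -/
def ChatD {p t : ℕ} (n : ℕ) (S : Matrix (Fin p) (Fin p) ℝ) (w : TrtSeq p t → ℝ)
    (i j : Fin 2) : Matrix (Fin t) (Fin t) ℝ :=
  (n : ℝ) • ∑ s : TrtSeq p t, w s • Chat S s i j

/-- `C_{dij} = Ĉ_{dij} - n (∑_s p_s G_i(s) B_t)' B̃ (∑_s p_s G_j(s) B_t)`. -/
def CD {p t : ℕ} (n : ℕ) (S : Matrix (Fin p) (Fin p) ℝ) (w : TrtSeq p t → ℝ)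
    (i j : Fin 2) : Matrix (Fin t) (Fin t) ℝ :=
  ChatD n S w i j -
    (n : ℝ) • ((∑ s : TrtSeq p t, w s • (Gmat i s * Bmat t))ᵀ * Btil S *
      (∑ s : TrtSeq p t, w s • (Gmat j s * Bmat t)))

/-- `c_{dij} = tr Ĉ_{dij} = n ∑_s p_s c_{sij}`. -/
def cD {p t : ℕ} (n : ℕ) (S : Matrix (Fin p) (Fin p) ℝ) (w : TrtSeq p t → ℝ)
    (i j : Fin 2) : ℝ :=
  (ChatD n S w i j).trace

/-- Fisher information matrix `C_{d,τ0,λ0}` for the direct treatment effects under the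
proportional model. -/
def CInfo {p t : ℕ} (n : ℕ) (S : Matrix (Fin p) (Fin p) ℝ) (w : TrtSeq p t → ℝ)
    (τ0 : Fin t → ℝ) (l0 : ℝ) : Matrix (Fin t) (Fin t) ℝ :=
  CD n S w 0 0 + l0 • (CD n S w 0 1 + CD n S w 1 0) + (l0 ^ 2) • CD n S w 1 1 -
    (τ0 ⬝ᵥ (CD n S w 1 1 *ᵥ τ0))⁻¹ •
      ((CD n S w 0 1 + l0 • CD n S w 1 1) * vecMulVec τ0 τ0 *
        (CD n S w 1 0 + l0 • CD n S w 1 1))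

/-- Permutation matrix `S_σ` with `(S_σ)_{j,i} = 1` iff `i = σ j`. -/
def Smat {t : ℕ} (σ : Equiv.Perm (Fin t)) : Matrix (Fin t) (Fin t) ℝ :=
  Matrix.of fun j i => if i = σ j then 1 else 0

/-- The relabelled sequence `σ ∘ s`. -/
def permSeq {p t : ℕ} (σ : Equiv.Perm (Fin t)) (s : TrtSeq p t) : TrtSeq p t := fun k => σ (s k)

/-- The design `σ d`, with weights `(σd)_s = p_{σ⁻¹ ∘ s}`. -/
def permDesign {p t : ℕ} (σ : Equiv.Perm (Fin t)) (w : TrtSeq p t → ℝ) : TrtSeq p t → ℝ :=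
  fun s => w (permSeq σ⁻¹ s)

/-- A design is symmetric if its weights are invariant under treatment relabelling. -/
def IsSymmetricDesign {p t : ℕ} (w : TrtSeq p t → ℝ) : Prop :=
  ∀ (σ : Equiv.Perm (Fin t)) (s : TrtSeq p t), w (permSeq σ s) = w s

/-- The symmetrized design `d*` with weights `p*_s = (1/t!) ∑_σ p_{σ⁻¹ ∘ s}`. -/
def symmetrize {p t : ℕ} (w : TrtSeq p t → ℝ) : TrtSeq p t → ℝ :=
  fun s => ((Nat.factorial t : ℝ))⁻¹ * ∑ σ : Equiv.Perm (Fin t), permDesign σ w s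

/-- `q_s(x) = c_{s11} + 2 c_{s12} x + c_{s22} x²`. -/
def qSeq {p t : ℕ} (S : Matrix (Fin p) (Fin p) ℝ) (s : TrtSeq p t) (x : ℝ) : ℝ :=
  cseq S s 0 0 + 2 * cseq S s 0 1 * x + cseq S s 1 1 * x ^ 2

/-- `q(x) = max_{s ∈ S} q_s(x)`. -/
def qMax (p t : ℕ) (S : Matrix (Fin p) (Fin p) ℝ) (x : ℝ) : ℝ :=
  sSup (Set.range fun s : TrtSeq p t => qSeq S s x)

/-- `y* = inf_x q(x)`. -/
def yStar (p t : ℕ) (S : Matrix (Fin p) (Fin p) ℝ) : ℝ := ⨅ x : ℝ, qMax p t S x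

/-- `q_d(x) = ∑_s p_s q_s(x)`. -/
def qD {p t : ℕ} (S : Matrix (Fin p) (Fin p) ℝ) (w : TrtSeq p t → ℝ) (x : ℝ) : ℝ :=
  ∑ s : TrtSeq p t, w s * qSeq S s x

/-- `x_d = -c_{d12}/c_{d22}`. -/
def xD {p t : ℕ} (n : ℕ) (S : Matrix (Fin p) (Fin p) ℝ) (w : TrtSeq p t → ℝ) : ℝ :=
  -(cD n S w 0 1) / cD n S w 1 1

/-- An exchangeable prior: a probability measure on `{τ : 1'τ = 0, τ ≠ 0}` that is
invariant under all coordinate permutations of `ℝ^t`. -/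
def IsExchangeablePrior {t : ℕ} (g : Measure (Fin t → ℝ)) : Prop :=
  IsProbabilityMeasure g ∧
    g {τ : Fin t → ℝ | ¬((∑ i, τ i) = 0 ∧ τ ≠ 0)} = 0 ∧
    ∀ σ : Equiv.Perm (Fin t), Measure.map (fun τ i => τ (σ i)) g = g

/-- `m_d(τ0) = min {ℓ' C_{d,τ0,λ0} ℓ : 1'ℓ = 0, ℓ'ℓ = 1}`. -/
def mD {p t : ℕ} (n : ℕ) (S : Matrix (Fin p) (Fin p) ℝ) (w : TrtSeq p t → ℝ) (l0 : ℝ)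
    (τ0 : Fin t → ℝ) : ℝ :=
  sInf {v : ℝ | ∃ l : Fin t → ℝ, (∑ i, l i) = 0 ∧ l ⬝ᵥ l = 1 ∧
    v = l ⬝ᵥ (CInfo n S w τ0 l0 *ᵥ l)}

/-- The E-criterion value `E_{g,λ0}(d) = ∫ m_d(τ0) g(dτ0)`. -/
def Ecrit {p t : ℕ} (n : ℕ) (S : Matrix (Fin p) (Fin p) ℝ) (g : Measure (Fin t → ℝ))
    (l0 : ℝ) (w : TrtSeq p t → ℝ) : ℝ :=
  ∫ τ0, mD n S w l0 τ0 ∂g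

/-- Competing designs for E-optimality: designs with a.e. positive `τ0' C_{d22} τ0`
and `g`-integrable `m_d`. -/
def EAdmissible {p t : ℕ} (n : ℕ) (S : Matrix (Fin p) (Fin p) ℝ) (g : Measure (Fin t → ℝ))
    (l0 : ℝ) (w : TrtSeq p t → ℝ) : Prop :=
  IsDesign w ∧ (∀ᵐ τ0 ∂g, 0 < τ0 ⬝ᵥ (CD n S w 1 1 *ᵥ τ0)) ∧
    Integrable (mD n S w l0) g

/-- `d` is `E_{g,λ0}`-optimal. -/
def EOptimal {p t : ℕ} (n : ℕ) (S : Matrix (Fin p) (Fin p) ℝ) (g : Measure (Fin t → ℝ))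
    (l0 : ℝ) (w : TrtSeq p t → ℝ) : Prop :=
  ∀ w' : TrtSeq p t → ℝ, EAdmissible n S g l0 w' → Ecrit n S g l0 w' ≤ Ecrit n S g l0 w

/-- A pseudo symmetric design: treatments equireplicated in each period,
and all `C_{dij}` completely symmetric. -/
def IsPseudoSymmetric {p t : ℕ} (n : ℕ) (S : Matrix (Fin p) (Fin p) ℝ)
    (w : TrtSeq p t → ℝ) : Prop :=
  (∀ (k : Fin p) (i : Fin t),
    (∑ s ∈ Finset.univ.filter fun s : TrtSeq p t => s k = i, w s) = 1 / (t : ℝ)) ∧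
  ∀ i j : Fin 2, ∃ a b : ℝ, CD n S w i j = a • (1 : Matrix (Fin t) (Fin t) ℝ) + b • Jmat t

/-- Eigenvalues of a (Hermitian) matrix sorted increasingly with multiplicity. -/
def sortedEigs {t : ℕ} (C : Matrix (Fin t) (Fin t) ℝ) : Fin t → ℝ :=
  if h : C.IsHermitian then (fun i => h.eigenvalues (Tuple.sort h.eigenvalues i))
  else fun _ => 0

/-- `Φ_D(C) = (∏_{i=1}^{t-1} a_i)^{1/(t-1)}` (eigenvalues sorted increasingly). -/
def PhiD {t : ℕ} (C : Matrix (Fin t) (Fin t) ℝ) : ℝ :=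
  (∏ i ∈ Finset.univ.filter fun i : Fin t => (i : ℕ) ≠ 0, sortedEigs C i) ^ (((t : ℝ) - 1)⁻¹)

/-- `Φ_A(C) = (t-1)(∑_{i=1}^{t-1} a_i⁻¹)⁻¹` if `a_1 > 0`, else `0`. -/
def PhiA {t : ℕ} (C : Matrix (Fin t) (Fin t) ℝ) : ℝ :=
  if ∀ i : Fin t, (i : ℕ) ≠ 0 → 0 < sortedEigs C i then
    ((t : ℝ) - 1) *
      (∑ i ∈ Finset.univ.filter fun i : Fin t => (i : ℕ) ≠ 0, (sortedEigs C i)⁻¹)⁻¹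
  else 0

/-- `Φ_T(C) = tr(C)/(t-1)`. -/
def PhiT {t : ℕ} (C : Matrix (Fin t) (Fin t) ℝ) : ℝ := C.trace / ((t : ℝ) - 1)

/-- The criterion value `∫ Φ(C_{d,τ0,λ0}) g(dτ0)`. -/
def PhiCrit {p t : ℕ} (n : ℕ) (S : Matrix (Fin p) (Fin p) ℝ)
    (Phi : Matrix (Fin t) (Fin t) ℝ → ℝ) (g : Measure (Fin t → ℝ)) (l0 : ℝ)
    (w : TrtSeq p t → ℝ) : ℝ :=
  ∫ τ0, Phi (CInfo n S w τ0 l0) ∂g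

/-- Competing designs for a `Φ`-criterion. -/
def PhiAdmissible {p t : ℕ} (n : ℕ) (S : Matrix (Fin p) (Fin p) ℝ)
    (Phi : Matrix (Fin t) (Fin t) ℝ → ℝ) (g : Measure (Fin t → ℝ)) (l0 : ℝ)
    (w : TrtSeq p t → ℝ) : Prop :=
  IsDesign w ∧ (∀ᵐ τ0 ∂g, 0 < τ0 ⬝ᵥ (CD n S w 1 1 *ᵥ τ0)) ∧
    Integrable (fun τ0 => Phi (CInfo n S w τ0 l0)) g

/-- `d` is `Φ_{g,λ0}`-optimal. -/
def PhiOptimal {p t : ℕ} (n : ℕ) (S : Matrix (Fin p) (Fin p) ℝ)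
    (Phi : Matrix (Fin t) (Fin t) ℝ → ℝ) (g : Measure (Fin t → ℝ)) (l0 : ℝ)
    (w : TrtSeq p t → ℝ) : Prop :=
  ∀ w' : TrtSeq p t → ℝ, PhiAdmissible n S Phi g l0 w' →
    PhiCrit n S Phi g l0 w' ≤ PhiCrit n S Phi g l0 w

/-- `H_1(s) = F_s`, `H_2(s) = T_s + λ0 F_s` (for estimating `λ`). -/
def Hmat {p t : ℕ} (l0 : ℝ) (i : Fin 2) (s : TrtSeq p t) : Matrix (Fin p) (Fin t) ℝ :=
  if i = 0 then Fmat s else Tmat s + l0 • Fmat s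

/-- `Â_{sij} = B_t H_i(s)' B̃ H_j(s) B_t`. -/
def Ahat {p t : ℕ} (S : Matrix (Fin p) (Fin p) ℝ) (l0 : ℝ) (s : TrtSeq p t) (i j : Fin 2) :
    Matrix (Fin t) (Fin t) ℝ :=
  Bmat t * (Hmat l0 i s)ᵀ * Btil S * Hmat l0 j s * Bmat t

/-- `h_{sij} = tr Â_{sij}`. -/
def hseq {p t : ℕ} (S : Matrix (Fin p) (Fin p) ℝ) (l0 : ℝ) (s : TrtSeq p t) (i j : Fin 2) : ℝ :=
  (Ahat S l0 s i j).trace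

/-- `Â_{dij} = n ∑_s p_s Â_{sij}`. -/
def AhatD {p t : ℕ} (n : ℕ) (S : Matrix (Fin p) (Fin p) ℝ) (l0 : ℝ) (w : TrtSeq p t → ℝ)
    (i j : Fin 2) : Matrix (Fin t) (Fin t) ℝ :=
  (n : ℝ) • ∑ s : TrtSeq p t, w s • Ahat S l0 s i j

/-- `A_{dij} = Â_{dij} - n (∑_s p_s H_i(s) B_t)' B̃ (∑_s p_s H_j(s) B_t)`. -/
def AD {p t : ℕ} (n : ℕ) (S : Matrix (Fin p) (Fin p) ℝ) (l0 : ℝ) (w : TrtSeq p t → ℝ)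
    (i j : Fin 2) : Matrix (Fin t) (Fin t) ℝ :=
  AhatD n S l0 w i j -
    (n : ℝ) • ((∑ s : TrtSeq p t, w s • (Hmat l0 i s * Bmat t))ᵀ * Btil S *
      (∑ s : TrtSeq p t, w s • (Hmat l0 j s * Bmat t)))

/-- `G` is a generalized inverse of `A`. -/
def IsGInv {t : ℕ} (A G : Matrix (Fin t) (Fin t) ℝ) : Prop := A * G * A = A

/-- `A_d(G) = A_{d11} - A_{d12} G A_{d21}` with `A_{d21} = A_{d12}'`. -/
def ADfun {p t : ℕ} (n : ℕ) (S : Matrix (Fin p) (Fin p) ℝ) (l0 : ℝ) (w : TrtSeq p t → ℝ)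
    (G : Matrix (Fin t) (Fin t) ℝ) : Matrix (Fin t) (Fin t) ℝ :=
  AD n S l0 w 0 0 - AD n S l0 w 0 1 * G * (AD n S l0 w 0 1)ᵀ

/-- `r_s(x) = h_{s11} + 2 h_{s12} x + h_{s22} x²`. -/
def rSeq {p t : ℕ} (S : Matrix (Fin p) (Fin p) ℝ) (l0 : ℝ) (s : TrtSeq p t) (x : ℝ) : ℝ :=
  hseq S l0 s 0 0 + 2 * hseq S l0 s 0 1 * x + hseq S l0 s 1 1 * x ^ 2

/-- `r(x) = max_s r_s(x)`. -/
def rMax (p t : ℕ) (S : Matrix (Fin p) (Fin p) ℝ) (l0 : ℝ) (x : ℝ) : ℝ :=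
  sSup (Set.range fun s : TrtSeq p t => rSeq S l0 s x)

/-- `y_0 = inf_x r(x)`. -/
def yZero (p t : ℕ) (S : Matrix (Fin p) (Fin p) ℝ) (l0 : ℝ) : ℝ := ⨅ x : ℝ, rMax p t S l0 x

lemma aux_Jmat_transpose (m : ℕ) : (Jmat m)ᵀ = Jmat m := by
  ext i j; simp [Jmat]

lemma aux_Bmat_transpose (t : ℕ) : (Bmat t)ᵀ = Bmat t := by
  simp [Bmat, aux_Jmat_transpose]

lemma aux_Jmat_mul_mul (m : ℕ) (A : Matrix (Fin m) (Fin m) ℝ) :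
    Jmat m * A * Jmat m =
      (((fun _ => (1 : ℝ)) : Fin m → ℝ) ⬝ᵥ (A *ᵥ fun _ => (1 : ℝ))) • Jmat m := by
  ext i j
  simp only [Matrix.mul_apply, Jmat, Matrix.of_apply, one_mul, mul_one, Matrix.smul_apply,
    smul_eq_mul, dotProduct, mulVec]
  rw [Finset.sum_comm]

lemma aux_Bmat_mul_Jmat {t : ℕ} (ht : 0 < t) : Bmat t * Jmat t = 0 := by
  have h : (t : ℝ) ≠ 0 := by positivity
  ext i j
  simp only [Bmat, Matrix.sub_mul, one_mul, Matrix.smul_mul, Matrix.sub_apply, Matrix.smul_apply,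
    Jmat, Matrix.of_apply, Matrix.one_mul]
  simp [Matrix.mul_apply, h]

lemma aux_Bmat_mul_self {t : ℕ} (ht : 0 < t) : Bmat t * Bmat t = Bmat t := by
  conv_lhs => rhs; rw [Bmat]
  rw [Matrix.mul_sub, Matrix.mul_smul, aux_Bmat_mul_Jmat ht]
  simp

lemma aux_Bmat_trace {t : ℕ} (ht : 0 < t) : (Bmat t).trace = (t : ℝ) - 1 := by
  have h : (t : ℝ) ≠ 0 := by positivity
  simp [Bmat, Matrix.trace, Jmat, Finset.sum_sub_distrib, h]

lemma aux_sum_entries {t : ℕ} (ht : 0 < t) (M : Matrix (Fin t) (Fin t) ℝ) (h : M * Bmat t = M) :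
    ∑ i, ∑ j, M i j = 0 := by
  refine Finset.sum_eq_zero fun i _ => ?_
  have h1 : M * Jmat t = 0 := by
    rw [← h, Matrix.mul_assoc, aux_Bmat_mul_Jmat ht, Matrix.mul_zero]
  have := congrFun (congrFun h1 i) i
  simpa [Matrix.mul_apply, Jmat] using this

lemma aux_Btil_factor {p : ℕ} (S : Matrix (Fin p) (Fin p) ℝ) (hS : S.PosDef) :
    ∃ C : Matrix (Fin p) (Fin p) ℝ, Btil S = Cᵀ * C := by
  have hI := hS.inv.posSemidef
  have hsym : (S⁻¹)ᵀ = S⁻¹ := by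
    have := hI.1
    simpa [Matrix.IsHermitian] using this
  obtain ⟨E, hE⟩ : ∃ E : Matrix (Fin p) (Fin p) ℝ, S⁻¹ = Eᵀ * E := by
    open scoped MatrixOrder Matrix.Norms.L2Operator in
    obtain ⟨E, hE⟩ := CStarAlgebra.nonneg_iff_eq_star_mul_self.mp hI.nonneg
    exact ⟨E, by simpa [Matrix.star_eq_conjTranspose] using hE⟩
  set c := (((fun _ => (1 : ℝ)) : Fin p → ℝ) ⬝ᵥ (S⁻¹ *ᵥ fun _ => (1 : ℝ))) with hc
  refine ⟨E * (1 - c⁻¹ • (Jmat p * S⁻¹)), ?_⟩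
  have hJ : Jmat p * S⁻¹ * Jmat p = c • Jmat p := aux_Jmat_mul_mul p S⁻¹
  have e1 : (E * (1 - c⁻¹ • (Jmat p * S⁻¹)))ᵀ * (E * (1 - c⁻¹ • (Jmat p * S⁻¹)))
      = (1 - c⁻¹ • (S⁻¹ * Jmat p)) * S⁻¹ * (1 - c⁻¹ • (Jmat p * S⁻¹)) := by
    rw [Matrix.transpose_mul, Matrix.transpose_sub, Matrix.transpose_smul, Matrix.transpose_mul,
      hsym, aux_Jmat_transpose, Matrix.transpose_one]
    conv_rhs => lhs; rhs; rw [hE]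
    simp only [Matrix.mul_assoc]
  have e2 : S⁻¹ * Jmat p * S⁻¹ * (Jmat p * S⁻¹) = c • (S⁻¹ * Jmat p * S⁻¹) := by
    calc S⁻¹ * Jmat p * S⁻¹ * (Jmat p * S⁻¹) = S⁻¹ * (Jmat p * S⁻¹ * Jmat p) * S⁻¹ := by
          simp only [Matrix.mul_assoc]
      _ = _ := by rw [hJ]; simp
  have hcc : c⁻¹ * (c⁻¹ * c) = c⁻¹ := by
    by_cases h0 : c = 0
    · simp [h0]
    · field_simp
  rw [e1, Btil, ← hc]
  simp only [Matrix.sub_mul, Matrix.mul_sub, Matrix.smul_mul, Matrix.mul_smul, Matrix.one_mul,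
    Matrix.mul_one, e2, smul_sub, smul_smul, hcc, ← Matrix.mul_assoc S⁻¹ (Jmat p) S⁻¹]
  abel

lemma aux_var {ι : Type*} [Fintype ι] {p t : ℕ} (D : Matrix (Fin p) (Fin p) ℝ) (w : ι → ℝ)
    (hw : ∑ s, w s = 1) (U V : ι → Matrix (Fin p) (Fin t) ℝ) :
    ∑ s, w s • ((U s - ∑ r, w r • U r)ᵀ * D * (V s - ∑ r, w r • V r)) =
      ∑ s, w s • ((U s)ᵀ * D * V s) - (∑ r, w r • U r)ᵀ * D * (∑ r, w r • V r) := by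
  set M := ∑ r, w r • U r with hM
  set N := ∑ r, w r • V r with hN
  have e1 : ∑ s, w s • ((U s)ᵀ * D * N) = Mᵀ * D * N := by
    rw [hM, Matrix.transpose_sum, Matrix.sum_mul, Matrix.sum_mul]
    simp
  have e2 : ∑ s, w s • (Mᵀ * D * V s) = Mᵀ * D * N := by
    rw [hN, Matrix.mul_sum]
    simp
  have e3 : ∑ s, w s • (Mᵀ * D * N) = Mᵀ * D * N := by
    rw [← Finset.sum_smul, hw, one_smul]
  simp only [Matrix.transpose_sub, Matrix.sub_mul, Matrix.mul_sub, smul_sub, Finset.sum_sub_distrib, e1, e2, e3]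
  abel

lemma aux_Ahat {p t : ℕ} (S : Matrix (Fin p) (Fin p) ℝ) (l0 : ℝ) (s : TrtSeq p t) (i j : Fin 2) :
    Ahat S l0 s i j = (Hmat l0 i s * Bmat t)ᵀ * Btil S * (Hmat l0 j s * Bmat t) := by
  simp only [Ahat, Matrix.transpose_mul, aux_Bmat_transpose, Matrix.mul_assoc]

lemma aux_AD_factor {p t : ℕ} (n : ℕ) (S : Matrix (Fin p) (Fin p) ℝ) (hS : S.PosDef) (l0 : ℝ)
    (w : TrtSeq p t → ℝ) (hw : IsDesign w) :
    ∃ X : Fin 2 → Matrix (TrtSeq p t × Fin p) (Fin t) ℝ,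
      ∀ i j, AD n S l0 w i j = (X i)ᵀ * X j := by
  obtain ⟨C, hC⟩ := aux_Btil_factor S hS
  let U : Fin 2 → TrtSeq p t → Matrix (Fin p) (Fin t) ℝ := fun i s => Hmat l0 i s * Bmat t
  let Z : Fin 2 → TrtSeq p t → Matrix (Fin p) (Fin t) ℝ :=
    fun i s => C * (U i s - ∑ r, w r • U i r)
  refine ⟨fun i => Matrix.of fun sk a => Real.sqrt (n * w sk.1) * Z i sk.1 sk.2 a, ?_⟩
  intro i j
  have h1 : AD n S l0 w i j = (n : ℝ) • ∑ s, w s • ((Z i s)ᵀ * Z j s) := by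
    have h2 := aux_var (Btil S) w hw.2 (U i) (U j)
    have h3 : ∀ s, (Z i s)ᵀ * Z j s =
        (U i s - ∑ r, w r • U i r)ᵀ * Btil S * (U j s - ∑ r, w r • U j r) := by
      intro s
      simp only [Z, Matrix.transpose_mul, hC, Matrix.mul_assoc]
    simp only [h3]
    rw [h2, AD, AhatD, smul_sub]
    simp only [aux_Ahat, U]
  rw [h1]
  ext a b
  simp only [Matrix.smul_apply, Matrix.sum_apply, Matrix.mul_apply, Matrix.transpose_apply,
    Matrix.of_apply, smul_eq_mul, Fintype.sum_prod_type, Finset.mul_sum]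
  refine Finset.sum_congr rfl fun s _ => Finset.sum_congr rfl fun k _ => ?_
  have : Real.sqrt (n * w s) * Real.sqrt (n * w s) = n * w s :=
    Real.mul_self_sqrt (mul_nonneg (Nat.cast_nonneg n) (hw.1 s))
  linear_combination (-(Z i s k a * Z j s k b)) * this

lemma aux_quad_nonneg {m t : Type*} [Fintype m] [Fintype t] (K : Matrix m t ℝ) (u : t → ℝ) :
    0 ≤ u ⬝ᵥ ((Kᵀ * K) *ᵥ u) := by
  rw [← Matrix.mulVec_mulVec, Matrix.dotProduct_mulVec, Matrix.vecMul_transpose]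
  exact Finset.sum_nonneg fun i _ => mul_self_nonneg _

lemma aux_schur {m t : Type*} [Fintype m] [Fintype t] (X Y : Matrix m t ℝ) (G : Matrix t t ℝ)
    (hG : Yᵀ * Y * G * (Yᵀ * Y) = Yᵀ * Y) (x : ℝ) :
    ∃ K : Matrix m t ℝ, Xᵀ * X + x • (Xᵀ * Y) + x • (Yᵀ * X) + x ^ 2 • (Yᵀ * Y)
      - (Xᵀ * X - Xᵀ * Y * G * (Xᵀ * Y)ᵀ) = Kᵀ * K := by
  have key : ∀ G : Matrix t t ℝ, Yᵀ * Y * G * (Yᵀ * Y) = Yᵀ * Y → Y * G * Yᵀ * Y = Y := by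
    intro G hG
    have h1 : Yᴴ * Y * (G * (Yᵀ * Y) - 1) = 0 := by
      rw [Matrix.conjTranspose_eq_transpose_of_trivial, Matrix.mul_sub, ← Matrix.mul_assoc, hG]
      simp
    rw [Matrix.conjTranspose_mul_self_mul_eq_zero, Matrix.mul_sub, sub_eq_zero, Matrix.mul_one] at h1
    rw [← Matrix.mul_assoc, ← Matrix.mul_assoc] at h1
    exact h1
  have hG' : Yᵀ * Y * Gᵀ * (Yᵀ * Y) = Yᵀ * Y := by
    have := congrArg Matrix.transpose hG
    simpa [Matrix.mul_assoc] using this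
  have k1 := key G hG
  have k2 := key Gᵀ hG'
  set P := Y * G * Yᵀ with hP
  have hPt : Pᵀ = Y * Gᵀ * Yᵀ := by simp [hP, Matrix.mul_assoc]
  have hPY' : Yᵀ * P = Yᵀ := by
    have := congrArg Matrix.transpose k2
    rw [← hPt, Matrix.transpose_mul, Matrix.transpose_transpose] at this
    exact this
  have hPP : P * Pᵀ = Pᵀ := by
    rw [hPt, ← Matrix.mul_assoc, ← Matrix.mul_assoc, k1]
  have hPs : Pᵀ = P := by
    have := congrArg Matrix.transpose hPP
    rw [Matrix.transpose_mul, Matrix.transpose_transpose] at this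
    rw [← hPP, this]
  refine ⟨P * (X + x • Y), ?_⟩
  have hPP2 : P * P = P := by rw [hPs] at hPP; exact hPP
  have e1 : (P * (X + x • Y))ᵀ * (P * (X + x • Y)) = (X + x • Y)ᵀ * (P * (X + x • Y)) := by
    rw [Matrix.transpose_mul, hPs, Matrix.mul_assoc, ← Matrix.mul_assoc P P, hPP2]
  have e2 : Xᵀ * Y * G * (Xᵀ * Y)ᵀ = Xᵀ * (P * X) := by
    simp [hP, Matrix.mul_assoc]
  have e3 : Yᵀ * (P * X) = Yᵀ * X := by rw [← Matrix.mul_assoc, hPY']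
  rw [e1, e2]
  simp only [Matrix.mul_add, Matrix.mul_smul, k1, Matrix.transpose_add, Matrix.transpose_smul, Matrix.add_mul,
    Matrix.smul_mul, e3]
  module

lemma aux_quad_eq {t : ℕ} (M : Matrix (Fin t) (Fin t) ℝ) (σ : Equiv.Perm (Fin t))
    (τ : Fin t → ℝ) :
    τ ⬝ᵥ (((Smat σ)ᵀ * M * Smat σ) *ᵥ τ) = (fun i => τ (σ i)) ⬝ᵥ (M *ᵥ fun i => τ (σ i)) := by
  have h : Smat σ *ᵥ τ = fun i => τ (σ i) := by
    ext i
    simp [Smat, mulVec, dotProduct]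
  rw [← Matrix.mulVec_mulVec, ← Matrix.mulVec_mulVec, Matrix.dotProduct_mulVec,
    Matrix.vecMul_transpose, h]

lemma aux_perm_sum {t : ℕ} (f : Fin t → Fin t → ℝ) (i j i' j' : Fin t) (h : i ≠ j)
    (h' : i' ≠ j') :
    ∑ σ : Equiv.Perm (Fin t), f (σ i) (σ j) = ∑ σ : Equiv.Perm (Fin t), f (σ i') (σ j') := by
  obtain ⟨π, h1, h2⟩ : ∃ π : Equiv.Perm (Fin t), π i = i' ∧ π j = j' := by
    refine ⟨Equiv.swap (Equiv.swap i i' j) j' * Equiv.swap i i', ?_, ?_⟩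
    · simp only [Equiv.Perm.mul_apply, Equiv.swap_apply_left]
      refine Equiv.swap_apply_of_ne_of_ne ?_ h'
      intro hh
      have := congrArg (Equiv.swap i i') hh
      simp at this
      exact h this
    · simp
  rw [← Equiv.sum_comp (Equiv.mulRight π) (fun σ : Equiv.Perm (Fin t) => f (σ i) (σ j))]
  simp [h1, h2]

lemma aux_perm_sum_diag {t : ℕ} (f : Fin t → ℝ) (i i' : Fin t) :
    ∑ σ : Equiv.Perm (Fin t), f (σ i) = ∑ σ : Equiv.Perm (Fin t), f (σ i') := by
  rw [← Equiv.sum_comp (Equiv.mulRight (Equiv.swap i i'))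
    (fun σ : Equiv.Perm (Fin t) => f (σ i))]
  simp

lemma aux_symm {t : ℕ} (ht : 3 ≤ t) (τ : Fin t → ℝ) :
    ∃ c : ℝ, ∀ M : Matrix (Fin t) (Fin t) ℝ, M * Bmat t = M →
      ∑ σ : Equiv.Perm (Fin t), τ ⬝ᵥ (((Smat σ)ᵀ * M * Smat σ) *ᵥ τ) = c * M.trace := by
  let i0 : Fin t := ⟨0, by omega⟩
  let i1 : Fin t := ⟨1, by omega⟩
  have h01 : i0 ≠ i1 := by simp [i0, i1]
  let a : ℝ := ∑ σ : Equiv.Perm (Fin t), τ (σ i0) * τ (σ i0)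
  let b : ℝ := ∑ σ : Equiv.Perm (Fin t), τ (σ i0) * τ (σ i1)
  refine ⟨a - b, fun M hM => ?_⟩
  have hs := aux_sum_entries (by omega) M hM
  have hij : ∀ i j, ∑ σ : Equiv.Perm (Fin t), τ (σ i) * τ (σ j) = b + if i = j then a - b else 0 := by
    intro i j
    by_cases h : i = j
    · subst h
      rw [if_pos rfl, aux_perm_sum_diag (fun k => τ k * τ k) i i0]
      simp only [a]; ring
    · rw [if_neg h, aux_perm_sum (fun k l => τ k * τ l) i j i0 i1 h h01]
      simp [b]
  calc ∑ σ : Equiv.Perm (Fin t), τ ⬝ᵥ (((Smat σ)ᵀ * M * Smat σ) *ᵥ τ)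
      = ∑ σ : Equiv.Perm (Fin t), ∑ i, ∑ j, M i j * (τ (σ i) * τ (σ j)) := by
        refine Finset.sum_congr rfl fun σ _ => ?_
        rw [aux_quad_eq]
        simp only [dotProduct, mulVec, Finset.mul_sum]
        exact Finset.sum_congr rfl fun i _ => Finset.sum_congr rfl fun j _ => by ring
    _ = ∑ i, ∑ j, M i j * (∑ σ : Equiv.Perm (Fin t), τ (σ i) * τ (σ j)) := by
        rw [Finset.sum_comm]
        refine Finset.sum_congr rfl fun i _ => ?_
        rw [Finset.sum_comm]
        simp only [Finset.mul_sum]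
    _ = b * (∑ i, ∑ j, M i j) + (a - b) * M.trace := by
        simp only [hij, mul_add, Finset.sum_add_distrib, Matrix.trace, Matrix.diag, Finset.mul_sum]
        simp [mul_comm]
    _ = _ := by rw [hs]; ring

lemma aux_Q {p t : ℕ} (n : ℕ) (S : Matrix (Fin p) (Fin p) ℝ) (l0 : ℝ)
    (w : TrtSeq p t → ℝ) (x : ℝ) (C : Matrix (Fin p) (Fin p) ℝ) (hC : Btil S = Cᵀ * C) :
    ∃ K : Matrix (Fin p) (Fin t) ℝ,
    (n : ℝ) • ∑ s, w s • (Ahat S l0 s 0 0 + x • Ahat S l0 s 0 1 + x • Ahat S l0 s 1 0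
        + x ^ 2 • Ahat S l0 s 1 1) -
      (AD n S l0 w 0 0 + x • AD n S l0 w 0 1 + x • AD n S l0 w 1 0 + x ^ 2 • AD n S l0 w 1 1)
      = Kᵀ * K := by
  set M0 := ∑ s : TrtSeq p t, w s • (Hmat l0 0 s * Bmat t) with hM0
  set M1 := ∑ s : TrtSeq p t, w s • (Hmat l0 1 s * Bmat t) with hM1
  refine ⟨Real.sqrt n • (C * (M0 + x • M1)), ?_⟩
  have e : (Real.sqrt n • (C * (M0 + x • M1)))ᵀ * (Real.sqrt n • (C * (M0 + x • M1)))
      = (n : ℝ) • ((M0 + x • M1)ᵀ * Btil S * (M0 + x • M1)) := by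
    rw [Matrix.transpose_smul, Matrix.smul_mul, Matrix.mul_smul, smul_smul,
      Real.mul_self_sqrt (Nat.cast_nonneg n), hC, Matrix.transpose_mul]
    simp only [Matrix.mul_assoc]
  have hsum : ∑ s, w s • (Ahat S l0 s 0 0 + x • Ahat S l0 s 0 1 + x • Ahat S l0 s 1 0
        + x ^ 2 • Ahat S l0 s 1 1) = ∑ s, w s • Ahat S l0 s 0 0 + x • ∑ s, w s • Ahat S l0 s 0 1
        + x • ∑ s, w s • Ahat S l0 s 1 0 + x ^ 2 • ∑ s, w s • Ahat S l0 s 1 1 := by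
    simp only [Finset.smul_sum, ← Finset.sum_add_distrib]
    exact Finset.sum_congr rfl fun s _ => by module
  rw [e, hsum]
  simp only [AD, AhatD, ← hM0, ← hM1, Matrix.transpose_add, Matrix.transpose_smul, Matrix.add_mul,
    Matrix.mul_add, Matrix.smul_mul, Matrix.mul_smul]
  module

lemma aux_Btil_transpose {p : ℕ} (S : Matrix (Fin p) (Fin p) ℝ) (hS : S.PosDef) :
    (Btil S)ᵀ = Btil S := by
  obtain ⟨C, hC⟩ := aux_Btil_factor S hS
  rw [hC]; simp

lemma aux_Ahat_transpose {p t : ℕ} (S : Matrix (Fin p) (Fin p) ℝ) (hS : S.PosDef) (l0 : ℝ)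
    (s : TrtSeq p t) (i j : Fin 2) : (Ahat S l0 s i j)ᵀ = Ahat S l0 s j i := by
  simp only [aux_Ahat, Matrix.transpose_mul, aux_Btil_transpose S hS, Matrix.transpose_transpose,
    Matrix.mul_assoc]

lemma aux_Ahat_mul_B {p t : ℕ} (ht : 0 < t) (S : Matrix (Fin p) (Fin p) ℝ) (l0 : ℝ)
    (s : TrtSeq p t) (i j : Fin 2) : Ahat S l0 s i j * Bmat t = Ahat S l0 s i j := by
  rw [Ahat, Matrix.mul_assoc, aux_Bmat_mul_self ht]

lemma aux_trace {p t : ℕ} (S : Matrix (Fin p) (Fin p) ℝ) (hS : S.PosDef) (l0 : ℝ)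
    (s : TrtSeq p t) (x : ℝ) :
    (Ahat S l0 s 0 0 + x • Ahat S l0 s 0 1 + x • Ahat S l0 s 1 0
        + x ^ 2 • Ahat S l0 s 1 1).trace = rSeq S l0 s x := by
  rw [← aux_Ahat_transpose S hS l0 s 0 1]
  simp only [Matrix.trace_add, Matrix.trace_smul, Matrix.trace_transpose, rSeq, hseq, smul_eq_mul]
  ring

lemma aux_rSeq_le {p t : ℕ} (S : Matrix (Fin p) (Fin p) ℝ) (l0 : ℝ) (s : TrtSeq p t) (x : ℝ) :
    rSeq S l0 s x ≤ rMax p t S l0 x :=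
  le_csSup (Set.finite_range _).bddAbove ⟨s, rfl⟩

/-- the five conditions yield `A_d(G) = n y_0 B_t/(t-1)` and maximize the
symmetrized Fisher information for the proportionality parameter `λ`. -/
theorem stmt16 (p t n : ℕ) (hp : 2 ≤ p) (ht : 3 ≤ t) (hn : 1 ≤ n)
    (S : Matrix (Fin p) (Fin p) ℝ) (hS : S.PosDef) (l0 : ℝ)
    (x0 : ℝ) (hx0 : rMax p t S l0 x0 = yZero p t S l0)
    (hx0u : ∀ x : ℝ, rMax p t S l0 x = yZero p t S l0 → x = x0)
    (w : TrtSeq p t → ℝ) (hw : IsDesign w)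
    (h1 : ∑ s ∈ Finset.univ.filter (fun s : TrtSeq p t => rSeq S l0 s x0 = yZero p t S l0),
        w s • (Ahat S l0 s 0 0 + x0 • Ahat S l0 s 0 1) =
      (yZero p t S l0 / ((t : ℝ) - 1)) • Bmat t)
    (h2 : ∑ s ∈ Finset.univ.filter (fun s : TrtSeq p t => rSeq S l0 s x0 = yZero p t S l0),
        w s • (Ahat S l0 s 1 0 + x0 • Ahat S l0 s 1 1) = 0)
    (h3 : ∑ s ∈ Finset.univ.filter (fun s : TrtSeq p t => rSeq S l0 s x0 = yZero p t S l0),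
        w s • (Btil S * (Fmat s + x0 • (Tmat s + l0 • Fmat s)) * Bmat t) = 0)
    (h4 : ∑ s ∈ Finset.univ.filter (fun s : TrtSeq p t => rSeq S l0 s x0 = yZero p t S l0),
        w s = 1)
    (h5 : ∀ s : TrtSeq p t, rSeq S l0 s x0 ≠ yZero p t S l0 → w s = 0) :
    (∀ G : Matrix (Fin t) (Fin t) ℝ, IsGInv (AD n S l0 w 1 1) G →
      ADfun n S l0 w G = ((n : ℝ) * yZero p t S l0 / ((t : ℝ) - 1)) • Bmat t) ∧
    ∀ (τ0 : Fin t → ℝ) (w' : TrtSeq p t → ℝ), IsDesign w' →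
      ∀ G' : Matrix (Fin t) (Fin t) ℝ, IsGInv (AD n S l0 w' 1 1) G' →
      ∀ G : Matrix (Fin t) (Fin t) ℝ, IsGInv (AD n S l0 w 1 1) G →
      ((Nat.factorial t : ℝ))⁻¹ * ∑ σ : Equiv.Perm (Fin t),
          τ0 ⬝ᵥ (((Smat σ)ᵀ * ADfun n S l0 w' G' * Smat σ) *ᵥ τ0) ≤
        ((Nat.factorial t : ℝ))⁻¹ * ∑ σ : Equiv.Perm (Fin t),
          τ0 ⬝ᵥ (((Smat σ)ᵀ * ADfun n S l0 w G * Smat σ) *ᵥ τ0) := by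
  have ht0 : 0 < t := by omega
  have hfil : ∀ f : TrtSeq p t → Matrix (Fin t) (Fin t) ℝ,
      ∑ s ∈ Finset.univ.filter (fun s : TrtSeq p t => rSeq S l0 s x0 = yZero p t S l0),
        w s • f s = ∑ s, w s • f s := by
    intro f
    rw [Finset.sum_filter]
    refine Finset.sum_congr rfl fun s _ => ?_
    split_ifs with h
    · rfl
    · rw [h5 s h, zero_smul]
  have hfil3 : ∀ f : TrtSeq p t → Matrix (Fin p) (Fin t) ℝ,
      ∑ s ∈ Finset.univ.filter (fun s : TrtSeq p t => rSeq S l0 s x0 = yZero p t S l0),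
        w s • f s = ∑ s, w s • f s := by
    intro f
    rw [Finset.sum_filter]
    refine Finset.sum_congr rfl fun s _ => ?_
    split_ifs with h
    · rfl
    · rw [h5 s h, zero_smul]
  rw [hfil] at h1 h2
  rw [hfil3] at h3
  set y := yZero p t S l0 with hy
  have part1 : ∀ G : Matrix (Fin t) (Fin t) ℝ, IsGInv (AD n S l0 w 1 1) G →
      ADfun n S l0 w G = ((n : ℝ) * y / ((t : ℝ) - 1)) • Bmat t := by
    intro G hG
    have h3' : Btil S * (∑ s : TrtSeq p t, w s • (Hmat l0 0 s * Bmat t)) +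
        x0 • (Btil S * (∑ s : TrtSeq p t, w s • (Hmat l0 1 s * Bmat t))) = 0 := by
      rw [← h3, Matrix.mul_sum, Matrix.mul_sum, Finset.smul_sum, ← Finset.sum_add_distrib]
      refine Finset.sum_congr rfl fun s _ => ?_
      simp only [Hmat, if_true, one_ne_zero, if_false, Matrix.mul_add, Matrix.add_mul, Matrix.mul_smul,
        Matrix.smul_mul, Matrix.mul_assoc]
      module
    have hrow : ∀ i : Fin 2, AD n S l0 w i 0 + x0 • AD n S l0 w i 1 =
        (n : ℝ) • ∑ s, w s • (Ahat S l0 s i 0 + x0 • Ahat S l0 s i 1) := by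
      intro i
      have e : (∑ s : TrtSeq p t, w s • (Hmat l0 i s * Bmat t))ᵀ *
          (Btil S * (∑ s : TrtSeq p t, w s • (Hmat l0 0 s * Bmat t)) +
          x0 • (Btil S * (∑ s : TrtSeq p t, w s • (Hmat l0 1 s * Bmat t)))) = 0 := by
        rw [h3', Matrix.mul_zero]
      rw [Matrix.mul_add, Matrix.mul_smul, ← Matrix.mul_assoc, ← Matrix.mul_assoc] at e
      have e' := eq_neg_of_add_eq_zero_left e
      simp only [AD, AhatD]
      rw [e']
      simp only [smul_add, Finset.sum_add_distrib, smul_comm (_ : ℝ) x0, ← Finset.smul_sum]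
      module
    have r0 := hrow 0
    have r1 := hrow 1
    rw [h1] at r0
    rw [h2, smul_zero] at r1
    obtain ⟨X, hX⟩ := aux_AD_factor n S hS l0 w hw
    have hT : (AD n S l0 w 0 1)ᵀ = AD n S l0 w 1 0 := by simp [hX]
    have hT2 : (AD n S l0 w 1 0)ᵀ = AD n S l0 w 0 1 := by simp [hX]
    have hT3 : (AD n S l0 w 1 1)ᵀ = AD n S l0 w 1 1 := by simp [hX]
    have a10 : AD n S l0 w 1 0 = -(x0 • AD n S l0 w 1 1) := eq_neg_of_add_eq_zero_left r1
    have a01 : AD n S l0 w 0 1 = -(x0 • AD n S l0 w 1 1) := by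
      rw [← hT2, a10]; simp [hT3]
    have hG' : AD n S l0 w 1 1 * G * AD n S l0 w 1 1 = AD n S l0 w 1 1 := hG
    rw [ADfun, hT, a10]
    rw [mul_neg, Matrix.mul_smul]
    conv_lhs => rw [a01]
    rw [Matrix.neg_mul, Matrix.neg_mul, Matrix.smul_mul, Matrix.smul_mul, hG']
    rw [a01] at r0
    calc _ = AD n S l0 w 0 0 + x0 • -(x0 • AD n S l0 w 1 1) := by module
      _ = _ := by rw [r0, smul_smul]; congr 1; ring
  refine ⟨part1, ?_⟩
  intro τ0 w' hw' G' hG' G hG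
  rw [part1 G hG]
  refine mul_le_mul_of_nonneg_left ?_ (by positivity)
  obtain ⟨c, hc⟩ := aux_symm ht τ0
  have htr : (0 : ℝ) < (t : ℝ) - 1 := by
    have : (3 : ℝ) ≤ t := by exact_mod_cast ht
    linarith
  have hBB := aux_Bmat_mul_self ht0
  have hcB := hc (Bmat t) hBB
  have hc0 : 0 ≤ c := by
    have h : 0 ≤ c * (Bmat t).trace := by
      rw [← hcB]
      refine Finset.sum_nonneg fun σ _ => ?_
      rw [aux_quad_eq]
      have := aux_quad_nonneg (Bmat t) (fun i => τ0 (σ i))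
      rwa [aux_Bmat_transpose, hBB] at this
    rw [aux_Bmat_trace ht0] at h
    exact nonneg_of_mul_nonneg_left h htr
  set Q := (n : ℝ) • ∑ s, w' s • (Ahat S l0 s 0 0 + x0 • Ahat S l0 s 0 1 + x0 • Ahat S l0 s 1 0
        + x0 ^ 2 • Ahat S l0 s 1 1) with hQ
  have hQB : Q * Bmat t = Q := by
    simp only [hQ, Matrix.smul_mul, Matrix.sum_mul, Matrix.add_mul, aux_Ahat_mul_B ht0]
  have hQtr : Q.trace ≤ n * y := by
    rw [hQ, Matrix.trace_smul, Matrix.trace_sum, smul_eq_mul]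
    refine mul_le_mul_of_nonneg_left ?_ (Nat.cast_nonneg n)
    calc _ = ∑ s, w' s * rSeq S l0 s x0 := by
          refine Finset.sum_congr rfl fun s _ => ?_
          rw [Matrix.trace_smul, aux_trace S hS, smul_eq_mul]
      _ ≤ ∑ s, w' s * y := by
          refine Finset.sum_le_sum fun s _ => mul_le_mul_of_nonneg_left ?_ (hw'.1 s)
          rw [← hx0]; exact aux_rSeq_le S l0 s x0
      _ = y := by rw [← Finset.sum_mul, hw'.2, one_mul]
  obtain ⟨C, hC⟩ := aux_Btil_factor S hS
  obtain ⟨K1, hK1⟩ := aux_Q n S l0 w' x0 C hC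
  rw [← hQ] at hK1
  obtain ⟨X, hX⟩ := aux_AD_factor n S hS l0 w' hw'
  have hG2 : AD n S l0 w' 1 1 * G' * AD n S l0 w' 1 1 = AD n S l0 w' 1 1 := hG'
  rw [hX] at hG2
  obtain ⟨K2, hK2⟩ := aux_schur (X 0) (X 1) G' hG2 x0
  have hfac : Q = ADfun n S l0 w' G' + K1ᵀ * K1 + K2ᵀ * K2 := by
    rw [← hK1, ← hK2, ADfun]
    simp only [hX]
    abel
  calc ∑ σ : Equiv.Perm (Fin t), τ0 ⬝ᵥ (((Smat σ)ᵀ * ADfun n S l0 w' G' * Smat σ) *ᵥ τ0)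
      ≤ ∑ σ : Equiv.Perm (Fin t), τ0 ⬝ᵥ (((Smat σ)ᵀ * Q * Smat σ) *ᵥ τ0) := by
        refine Finset.sum_le_sum fun σ _ => ?_
        rw [aux_quad_eq, aux_quad_eq, hfac, Matrix.add_mulVec, Matrix.add_mulVec, dotProduct_add,
          dotProduct_add]
        have q1 := aux_quad_nonneg K1 (fun i => τ0 (σ i))
        have q2 := aux_quad_nonneg K2 (fun i => τ0 (σ i))
        linarith
    _ = c * Q.trace := hc Q hQB
    _ ≤ c * (n * y) := mul_le_mul_of_nonneg_left hQtr hc0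
    _ = c * (((n : ℝ) * y / ((t : ℝ) - 1)) • Bmat t).trace := by
        rw [Matrix.trace_smul, aux_Bmat_trace ht0, smul_eq_mul, div_mul_cancel₀ _ htr.ne']
    _ = _ := (hc _ (by rw [Matrix.smul_mul, hBB])).symm
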